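/- Let X be a measurable space with probability measure μ, let σ ∈ (0,1] and ε ∈ (0, σ], and let B be a finite set of measurable functions b : X → {0,1} with ln|B| ≥ 1 and ∫ b dμ ≤ ε for every b ∈ B. Let (Ω, ℱ, P) be a probability space with a filtration 𝒢_0 ⊆ … ⊆ 𝒢_T and let x_1, …, x_T : Ω → X be random variables such that x_t is 𝒢_t-measurable and, for every b ∈ B and every t, E[b(x_t) ∣ 𝒢_{t−1}] ≤ σ^{-1} ∫ b dμ almost surely. If T ε / σ ≥ √(ln|B|), then E[max_{b ∈ B} Σ_{t=1}^T b(x_t)] ≤ 3 T (ε/σ) √(ln|B|). -/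

import Mathlib

open MeasureTheory

/-!
Convexity of `exp` on `[0, 1]` gives `exp (lam y) ≤ 1 + (exp lam - 1) y`. Multiplying by the
exponential of the past sum and conditioning, each new summand multiplies the moment generating
function by at most `1 + (exp lam - 1) c ≤ exp ((exp lam - 1) c)`, where `c` bounds its conditional
mean. Jensen's inequality and a union bound over the family turn this Poisson-type bound into
`lam * E[max] ≤ log |ι| + (exp lam - 1) V`, with `V` the sum of the bounds `c`. At `lam = 1` both
terms are absorbed into `3 V √(log |ι|)`, since `log |ι| ≤ V √(log |ι|)` and `1 ≤ √(log |ι|)`.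
-/

section

open ProbabilityTheory Real

lemma exp_mul_le_one_add_mul {y : ℝ} (lam : ℝ) (hy : y ∈ Set.Icc 0 1) :
    exp (lam * y) ≤ 1 + (exp lam - 1) * y := by
  have chord := convexOn_exp.2 (Set.mem_univ 0) (Set.mem_univ lam) (sub_nonneg.2 hy.2) hy.1
    (sub_add_cancel 1 y)
  simp only [smul_eq_mul, mul_zero, zero_add, exp_zero, mul_one] at chord
  calc exp (lam * y) = exp (y * lam) := by rw [mul_comm]
    _ ≤ 1 - y + y * exp lam := chord
    _ = 1 + (exp lam - 1) * y := by ring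

lemma add_exp_one_sub_one_mul_le_three_mul_sqrt {L V : ℝ} (hL : 1 ≤ L) (hLV : √L ≤ V) :
    L + (exp 1 - 1) * V ≤ 3 * V * √L := by
  have one_le_sqrt : 1 ≤ √L := one_le_sqrt.2 hL
  have V_nonneg : 0 ≤ V := (sqrt_nonneg L).trans hLV
  have exp_one_sub_one_le : exp 1 - 1 ≤ 2 := by linarith [exp_one_lt_three]
  calc L + (exp 1 - 1) * V = √L * √L + (exp 1 - 1) * V * 1 := by
        rw [mul_self_sqrt (zero_le_one.trans hL), mul_one]
    _ ≤ V * √L + 2 * V * √L := by gcongr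
    _ = 3 * V * √L := by ring

variable {Ω : Type*} {m mΩ : MeasurableSpace Ω} {P : Measure Ω}

lemma integral_mul_le_of_condExp_le (hm : m ≤ mΩ) [SigmaFinite (P.trim hm)]
    {f g : Ω → ℝ} {c : ℝ} (hf : StronglyMeasurable[m] f)
    (hf_nonneg : 0 ≤ᵐ[P] f) (hf_int : Integrable f P) (hg_int : Integrable g P)
    (hfg_int : Integrable (f * g) P) (hgc : P[g | m] ≤ᵐ[P] fun _ ↦ c) :
    ∫ ω, f ω * g ω ∂P ≤ c * ∫ ω, f ω ∂P := by
  have pull_out : P[f * g | m] =ᵐ[P] f * P[g | m] :=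
    condExp_mul_of_stronglyMeasurable_left hf hfg_int hg_int
  calc ∫ ω, f ω * g ω ∂P = ∫ ω, (P[f * g | m]) ω ∂P := (integral_condExp hm).symm
    _ ≤ ∫ ω, c * f ω ∂P := by
        refine integral_mono_ae integrable_condExp (hf_int.const_mul c) ?_
        filter_upwards [pull_out, hgc, hf_nonneg] with ω h_pull_out h_le h_nonneg
        rw [h_pull_out, Pi.mul_apply, mul_comm]
        exact mul_le_mul_of_nonneg_right h_le h_nonneg
    _ = c * ∫ ω, f ω ∂P := integral_const_mul c f

lemma mgf_add_le_of_condExp_le [IsFiniteMeasure P] (hm : m ≤ mΩ)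
    {S Y : Ω → ℝ} {c lam : ℝ} (hlam : 0 ≤ lam) (hS : StronglyMeasurable[m] S)
    (hS_int : Integrable (fun ω ↦ exp (lam * S ω)) P) (hY : AEStronglyMeasurable Y P)
    (hY_mem : ∀ᵐ ω ∂P, Y ω ∈ Set.Icc 0 1) (hYc : P[Y | m] ≤ᵐ[P] fun _ ↦ c) :
    mgf (S + Y) P lam ≤ exp ((exp lam - 1) * c) * mgf S P lam := by
  have hY_bound : ∀ᵐ ω ∂P, ‖Y ω‖ ≤ 1 := by
    filter_upwards [hY_mem] with ω hω
    exact (norm_of_nonneg hω.1).trans_le hω.2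
  have hprod_int : Integrable (fun ω ↦ exp (lam * S ω) * Y ω) P := hS_int.mul_bdd hY hY_bound
  have hexp : 0 ≤ exp lam - 1 := sub_nonneg.2 (one_le_exp hlam)
  have hprod_le : ∫ ω, exp (lam * S ω) * Y ω ∂P ≤ c * mgf S P lam :=
    integral_mul_le_of_condExp_le hm
      (continuous_exp.comp_stronglyMeasurable (hS.const_mul lam))
      (.of_forall fun ω ↦ (exp_pos _).le) hS_int (.of_bound hY 1 hY_bound) hprod_int hYc
  calc mgf (S + Y) P lam
      ≤ ∫ ω, (exp (lam * S ω) + (exp lam - 1) * (exp (lam * S ω) * Y ω)) ∂P := by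
        refine integral_mono_of_nonneg (.of_forall fun ω ↦ (exp_pos _).le)
          (hS_int.add (hprod_int.const_mul _)) ?_
        filter_upwards [hY_mem] with ω hω
        calc exp (lam * (S ω + Y ω)) = exp (lam * S ω) * exp (lam * Y ω) := by
              rw [mul_add, exp_add]
          _ ≤ exp (lam * S ω) * (1 + (exp lam - 1) * Y ω) := by
              gcongr
              exact exp_mul_le_one_add_mul lam hω
          _ = exp (lam * S ω) + (exp lam - 1) * (exp (lam * S ω) * Y ω) := by ring
    _ = mgf S P lam + (exp lam - 1) * ∫ ω, exp (lam * S ω) * Y ω ∂P := by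
        rw [integral_add hS_int (hprod_int.const_mul _), integral_const_mul, mgf]
    _ ≤ mgf S P lam + (exp lam - 1) * (c * mgf S P lam) := by gcongr
    _ = ((exp lam - 1) * c + 1) * mgf S P lam := by ring
    _ ≤ exp ((exp lam - 1) * c) * mgf S P lam :=
        mul_le_mul_of_nonneg_right (add_one_le_exp _) mgf_nonneg

lemma integrable_exp_mul_sum_of_mem_Icc [IsFiniteMeasure P] {κ : Type*} {s : Finset κ}
    {Y : κ → Ω → ℝ} {a b : ℝ} (lam : ℝ) (hY : ∀ t ∈ s, AEMeasurable (Y t) P)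
    (hY_mem : ∀ t ∈ s, ∀ᵐ ω ∂P, Y t ω ∈ Set.Icc a b) :
    Integrable (fun ω ↦ exp (lam * (∑ t ∈ s, Y t) ω)) P := by
  refine integrable_exp_mul_of_mem_Icc (a := ∑ _t ∈ s, a) (b := ∑ _t ∈ s, b)
    (s.aemeasurable_sum hY) ?_
  filter_upwards [(Filter.eventually_all_finset s).2 hY_mem] with ω hω
  rw [Finset.sum_apply]
  exact ⟨Finset.sum_le_sum fun t ht ↦ (hω t ht).1, Finset.sum_le_sum fun t ht ↦ (hω t ht).2⟩

lemma mgf_sum_le_of_condExp_le [IsProbabilityMeasure P] {𝒢 : Filtration ℕ mΩ}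
    {Y : ℕ → Ω → ℝ} {c : ℕ → ℝ} {lam : ℝ} {T : ℕ} (hlam : 0 ≤ lam)
    (hY : ∀ t ∈ Finset.Icc 1 T, StronglyMeasurable[𝒢 t] (Y t))
    (hY_mem : ∀ t ∈ Finset.Icc 1 T, ∀ᵐ ω ∂P, Y t ω ∈ Set.Icc 0 1)
    (hYc : ∀ t ∈ Finset.Icc 1 T, P[Y t | 𝒢 (t - 1)] ≤ᵐ[P] fun _ ↦ c t) :
    mgf (∑ t ∈ Finset.Icc 1 T, Y t) P lam ≤ exp ((exp lam - 1) * ∑ t ∈ Finset.Icc 1 T, c t) := by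
  induction T with
  | zero => simp
  | succ n ih =>
    have past_subset : Finset.Icc 1 n ⊆ Finset.Icc 1 (n + 1) :=
      Finset.Icc_subset_Icc_right n.le_succ
    have last_mem : n + 1 ∈ Finset.Icc 1 (n + 1) := Finset.right_mem_Icc.2 n.succ_pos
    have past_measurable : StronglyMeasurable[𝒢 n] (∑ t ∈ Finset.Icc 1 n, Y t) :=
      Finset.stronglyMeasurable_sum _ fun t ht ↦
        (hY t (past_subset ht)).mono (𝒢.mono (Finset.mem_Icc.1 ht).2)
    have past_integrable : Integrable (fun ω ↦ exp (lam * (∑ t ∈ Finset.Icc 1 n, Y t) ω)) P :=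
      integrable_exp_mul_sum_of_mem_Icc lam
        (fun t ht ↦ ((hY t (past_subset ht)).mono (𝒢.le t)).measurable.aemeasurable)
        fun t ht ↦ hY_mem t (past_subset ht)
    have past_le := ih (fun t ht ↦ hY t (past_subset ht)) (fun t ht ↦ hY_mem t (past_subset ht))
      fun t ht ↦ hYc t (past_subset ht)
    rw [Finset.sum_Icc_succ_top n.succ_pos, Finset.sum_Icc_succ_top n.succ_pos]
    calc mgf (∑ t ∈ Finset.Icc 1 n, Y t + Y (n + 1)) P lam
        ≤ exp ((exp lam - 1) * c (n + 1)) * mgf (∑ t ∈ Finset.Icc 1 n, Y t) P lam :=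
          mgf_add_le_of_condExp_le (𝒢.le n) hlam past_measurable past_integrable
            ((hY _ last_mem).mono (𝒢.le _)).aestronglyMeasurable (hY_mem _ last_mem)
            (hYc _ last_mem)
      _ ≤ exp ((exp lam - 1) * c (n + 1)) * exp ((exp lam - 1) * ∑ t ∈ Finset.Icc 1 n, c t) := by
          gcongr
      _ = exp ((exp lam - 1) * (∑ t ∈ Finset.Icc 1 n, c t + c (n + 1))) := by
          rw [← exp_add, ← mul_add, add_comm (c (n + 1))]

lemma integrable_finset_sup' {ι : Type*} {s : Finset ι} (hs : s.Nonempty) {S : ι → Ω → ℝ}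
    (hS : ∀ i ∈ s, Integrable (S i) P) : Integrable (fun ω ↦ s.sup' hs fun i ↦ S i ω) P := by
  simp_rw [← Finset.sup'_apply]
  exact Finset.sup'_induction hs S (p := (Integrable · P)) (fun _ hf _ hg ↦ hf.sup hg) hS

lemma mul_integral_sup'_le_log_sum_mgf [IsProbabilityMeasure P] {ι : Type*} {s : Finset ι}
    (hs : s.Nonempty) {S : ι → Ω → ℝ} {lam : ℝ} (hS : ∀ i ∈ s, Integrable (S i) P)
    (hS_exp : ∀ i ∈ s, Integrable (fun ω ↦ exp (lam * S i ω)) P) :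
    lam * ∫ ω, (s.sup' hs fun i ↦ S i ω) ∂P ≤ log (∑ i ∈ s, mgf (S i) P lam) := by
  set M : Ω → ℝ := fun ω ↦ s.sup' hs fun i ↦ S i ω
  have hM : Integrable (fun ω ↦ lam * M ω) P := (integrable_finset_sup' hs hS).const_mul lam
  have hsum_exp : Integrable (fun ω ↦ ∑ i ∈ s, exp (lam * S i ω)) P :=
    integrable_finsetSum s hS_exp
  have exp_M_le (ω : Ω) : exp (lam * M ω) ≤ ∑ i ∈ s, exp (lam * S i ω) := by
    obtain ⟨i, hi, hMi⟩ : ∃ i ∈ s, M ω = S i ω := s.exists_mem_eq_sup' hs _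
    rw [hMi]
    exact Finset.single_le_sum (f := fun j ↦ exp (lam * S j ω)) (fun j _ ↦ (exp_pos _).le) hi
  have hM_exp : Integrable (fun ω ↦ exp (lam * M ω)) P :=
    hsum_exp.mono' (continuous_exp.comp_aestronglyMeasurable hM.aestronglyMeasurable)
      (.of_forall fun ω ↦ by simpa only [norm_eq_abs, abs_exp] using exp_M_le ω)
  have sum_mgf_pos : 0 < ∑ i ∈ s, mgf (S i) P lam :=
    Finset.sum_pos (fun i hi ↦ mgf_pos (hS_exp i hi)) hs
  rw [le_log_iff_exp_le sum_mgf_pos, ← integral_const_mul]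
  calc exp (∫ ω, lam * M ω ∂P) ≤ ∫ ω, exp (lam * M ω) ∂P :=
        convexOn_exp.map_integral_le continuous_exp.continuousOn isClosed_univ
          (.of_forall fun _ ↦ Set.mem_univ _) hM hM_exp
    _ ≤ ∫ ω, ∑ i ∈ s, exp (lam * S i ω) ∂P := integral_mono hM_exp hsum_exp exp_M_le
    _ = ∑ i ∈ s, mgf (S i) P lam := integral_finsetSum s hS_exp

lemma mul_integral_sup'_sum_le_of_condExp_le [IsProbabilityMeasure P] {𝒢 : Filtration ℕ mΩ}
    {ι : Type*} {s : Finset ι} (hs : s.Nonempty) {Y : ι → ℕ → Ω → ℝ} {c : ℕ → ℝ} {lam : ℝ} {T : ℕ}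
    (hlam : 0 ≤ lam) (hY : ∀ i ∈ s, ∀ t ∈ Finset.Icc 1 T, StronglyMeasurable[𝒢 t] (Y i t))
    (hY_mem : ∀ i ∈ s, ∀ t ∈ Finset.Icc 1 T, ∀ᵐ ω ∂P, Y i t ω ∈ Set.Icc 0 1)
    (hYc : ∀ i ∈ s, ∀ t ∈ Finset.Icc 1 T, P[Y i t | 𝒢 (t - 1)] ≤ᵐ[P] fun _ ↦ c t) :
    lam * ∫ ω, (s.sup' hs fun i ↦ ∑ t ∈ Finset.Icc 1 T, Y i t ω) ∂P
      ≤ log s.card + (exp lam - 1) * ∑ t ∈ Finset.Icc 1 T, c t := by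
  set S : ι → Ω → ℝ := fun i ↦ ∑ t ∈ Finset.Icc 1 T, Y i t
  set V : ℝ := ∑ t ∈ Finset.Icc 1 T, c t
  have hY_meas (i) (hi : i ∈ s) (t) (ht : t ∈ Finset.Icc 1 T) : AEMeasurable (Y i t) P :=
    ((hY i hi t ht).mono (𝒢.le t)).measurable.aemeasurable
  have hS (i) (hi : i ∈ s) : Integrable (S i) P :=
    integrable_finsetSum' _ fun t ht ↦ .of_mem_Icc 0 1 (hY_meas i hi t ht) (hY_mem i hi t ht)
  have hS_exp (i) (hi : i ∈ s) : Integrable (fun ω ↦ exp (lam * S i ω)) P :=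
    integrable_exp_mul_sum_of_mem_Icc lam (hY_meas i hi) (hY_mem i hi)
  calc lam * ∫ ω, (s.sup' hs fun i ↦ ∑ t ∈ Finset.Icc 1 T, Y i t ω) ∂P
      = lam * ∫ ω, (s.sup' hs fun i ↦ S i ω) ∂P := by simp only [S, Finset.sum_apply]
    _ ≤ log (∑ i ∈ s, mgf (S i) P lam) := mul_integral_sup'_le_log_sum_mgf hs hS hS_exp
    _ ≤ log (∑ _i ∈ s, exp ((exp lam - 1) * V)) :=
        log_le_log (Finset.sum_pos (fun i hi ↦ mgf_pos (hS_exp i hi)) hs)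
          (Finset.sum_le_sum fun i hi ↦
            mgf_sum_le_of_condExp_le hlam (hY i hi) (hY_mem i hi) (hYc i hi))
    _ = log s.card + (exp lam - 1) * V := by
        rw [Finset.sum_const, nsmul_eq_mul,
          log_mul (Nat.cast_ne_zero.2 hs.card_ne_zero) (exp_ne_zero _), log_exp]

theorem adaptive_smooth_maximal_bound_general [IsProbabilityMeasure P] (𝒢 : Filtration ℕ mΩ)
    {ι : Type*} {s : Finset ι} (hs : s.Nonempty) (hs_card : 1 ≤ log s.card)
    {Y : ι → ℕ → Ω → ℝ} {c : ℕ → ℝ} {T : ℕ}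
    (hY : ∀ i ∈ s, ∀ t ∈ Finset.Icc 1 T, StronglyMeasurable[𝒢 t] (Y i t))
    (hY_mem : ∀ i ∈ s, ∀ t ∈ Finset.Icc 1 T, ∀ᵐ ω ∂P, Y i t ω ∈ Set.Icc 0 1)
    (hYc : ∀ i ∈ s, ∀ t ∈ Finset.Icc 1 T, P[Y i t | 𝒢 (t - 1)] ≤ᵐ[P] fun _ ↦ c t)
    (hc : √(log s.card) ≤ ∑ t ∈ Finset.Icc 1 T, c t) :
    ∫ ω, (s.sup' hs fun i ↦ ∑ t ∈ Finset.Icc 1 T, Y i t ω) ∂P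
      ≤ 3 * (∑ t ∈ Finset.Icc 1 T, c t) * √(log s.card) := by
  have bound_at_one := mul_integral_sup'_sum_le_of_condExp_le hs zero_le_one hY hY_mem hYc
  rw [one_mul] at bound_at_one
  exact bound_at_one.trans (add_exp_one_sub_one_mul_le_three_mul_sqrt hs_card hc)

end

/-- **Analytic core of Theorem 3 (regret against adaptive σ-smooth adversaries).**
`B` is a finite family (indexed by `ι`) of measurable `{0,1}`-valued functions on `X`, each
of `μ`-mean at most `ε`; `x_1, …, x_T` is an adapted process whose conditional law at each
step is `σ`-smooth with respect to `μ` when tested on `B`. If `T ε / σ ≥ √(ln |B|)` then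
`E[max_b Σ_t b(x_t)] ≤ 3 T (ε/σ) √(ln |B|)`. -/
theorem adaptive_smooth_maximal_bound
    {X : Type*} [MeasurableSpace X] (μ : Measure X) [IsProbabilityMeasure μ]
    (σ ε : ℝ) (hσ0 : 0 < σ) (hσ1 : σ ≤ 1) (hε0 : 0 < ε) (hεσ : ε ≤ σ)
    {ι : Type*} [Fintype ι] [Nonempty ι]
    (b : ι → X → ℝ)
    (hbmeas : ∀ i, Measurable (b i))
    (hbval : ∀ i x, b i x = 0 ∨ b i x = 1)
    (hbmean : ∀ i, ∫ y, b i y ∂μ ≤ ε)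
    (hι : 1 ≤ Real.log (Fintype.card ι))
    {Ω : Type*} {mΩ : MeasurableSpace Ω} (P : Measure Ω) [IsProbabilityMeasure P]
    (T : ℕ) (𝒢 : ℕ → MeasurableSpace Ω)
    (hmono : ∀ i j, i ≤ j → 𝒢 i ≤ 𝒢 j)
    (hle : ∀ i, 𝒢 i ≤ mΩ)
    (x : ℕ → Ω → X)
    (hxmeas : ∀ t ∈ Finset.Icc 1 T, Measurable[𝒢 t] (x t))
    (hsmooth : ∀ i, ∀ t ∈ Finset.Icc 1 T,
      P[fun ω => b i (x t ω) | 𝒢 (t - 1)] ≤ᵐ[P] fun _ => σ⁻¹ * ∫ y, b i y ∂μ)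
    (hTεσ : Real.sqrt (Real.log (Fintype.card ι)) ≤ T * ε / σ) :
    ∫ ω, (Finset.univ.sup' Finset.univ_nonempty
        fun i => ∑ t ∈ Finset.Icc 1 T, b i (x t ω)) ∂P
      ≤ 3 * T * (ε / σ) * Real.sqrt (Real.log (Fintype.card ι)) := by
  have cond_mean_le (i : ι) : σ⁻¹ * ∫ y, b i y ∂μ ≤ ε / σ := by
    rw [div_eq_inv_mul]
    exact mul_le_mul_of_nonneg_left (hbmean i) (inv_nonneg.2 hσ0.le)
  have sum_const_mean : ∑ _t ∈ Finset.Icc 1 T, ε / σ = T * (ε / σ) := by simp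
  rw [mul_assoc 3, ← sum_const_mean]
  exact adaptive_smooth_maximal_bound_general ⟨𝒢, fun i j ↦ hmono i j, hle⟩
    Finset.univ_nonempty hι
    (fun i _ t ht ↦ ((hbmeas i).comp (hxmeas t ht)).stronglyMeasurable)
    (fun i _ t _ ↦ .of_forall fun ω ↦ by rcases hbval i (x t ω) with h | h <;> simp [h])
    (fun i _ t ht ↦ (hsmooth i t ht).trans (.of_forall fun _ ↦ cond_mean_le i))
    (by rwa [sum_const_mean, ← mul_div_assoc])
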